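/- There exists N such that for every n ≥ N and every Boolean function f on n variables with f⁻¹(1) nonempty, there exist a real ε ∈ (0, 1] and a CNF formula φ with φ⁻¹(1) ⊆ f⁻¹(1), Pr_{x uniform in f⁻¹(1)}[φ(x) = 1] ≥ ε, and |φ| ≤ ε · 2^{n+3}/n. -/

import Mathlib

/-!
The approximator comes from looking at `f` around a point of a subcube. Split the input as
`x = (y, z)` with `y ∈ {0,1}^m`, `z ∈ {0,1}^k`, `m = ⌊n/2⌋`, `k = n - m`, and let `c ∈ {0,1}^k`.
On the Hamming sphere of radius one around `c`, every Boolean function of `z` is a single clause: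
if `g` holds exactly at the neighbours of `c` in the directions `J`, then on the sphere `g` is
`⋁_{j ∈ J} (z_j ≠ c_j)`. Hence `f(y, z) ∧ [z ∈ sphere(c)]` is a CNF (`sphereCNF`) with one clause
for each of the `2^m` values of `y`, plus at most `1 + k²` clauses stating that `z` differs from
`c` in exactly one coordinate (`sphereCNF_sat`, `sphereCNF_card`).

Each `z` lies on exactly `k` of the `2^k` spheres, so some centre `c` captures at least a fraction
`ε ≥ k / 2^k` of `f⁻¹(1)` (`exists_center`). Since `1 + k² ≤ 3 · 2^m` and `2k ≥ n`, the size is at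
most `4 · 2^m ≤ (k / 2^k) · 2^(n+3) / n`.
-/

/-- A literal over `n` variables: a coordinate `x_i` (if `neg = false`)
or its negation `¬ x_i` (if `neg = true`). -/
structure Lit (n : ℕ) where
  idx : Fin n
  neg : Bool
deriving DecidableEq

/-- Evaluation of a literal at an assignment. -/
def Lit.eval {n : ℕ} (l : Lit n) (x : Fin n → Bool) : Bool :=
  if l.neg then !(x l.idx) else x l.idx

/-- A clause: a finite set of literals, evaluated as their disjunction. -/
abbrev Clause (n : ℕ) := Finset (Lit n)

/-- A CNF formula: a finite set of clauses, evaluated as their conjunction.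
Its size is its number of clauses (`Finset.card`). -/
abbrev CNF (n : ℕ) := Finset (Clause n)

/-- `φ.sat x` means the CNF formula `φ` evaluates to `1` at `x`. -/
def CNF.sat {n : ℕ} (φ : CNF n) (x : Fin n → Bool) : Prop :=
  ∀ c ∈ φ, ∃ l ∈ c, l.eval x = true

instance {n : ℕ} (φ : CNF n) (x : Fin n → Bool) : Decidable (φ.sat x) :=
  inferInstanceAs (Decidable (∀ c ∈ φ, ∃ l ∈ c, Lit.eval l x = true))

/-- `φ⁻¹(1) ⊆ f⁻¹(1)`: the formula does not err on inputs where `f` is `0`. -/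
def CNF.onesided {n : ℕ} (φ : CNF n) (f : (Fin n → Bool) → Bool) : Prop :=
  ∀ x, φ.sat x → f x = true

/-- A CNF formula is monotone if none of its literals is negated. -/
def CNF.mono {n : ℕ} (φ : CNF n) : Prop :=
  ∀ c ∈ φ, ∀ l ∈ c, l.neg = false

/-- A distribution on `f⁻¹(1)`: nonnegative, supported on `f⁻¹(1)`, summing to 1. -/
def IsDistOn {n : ℕ} (μ : (Fin n → Bool) → ℝ) (f : (Fin n → Bool) → Bool) : Prop :=
  (∀ x, 0 ≤ μ x) ∧ (∀ x, f x = false → μ x = 0) ∧ (∑ x, μ x) = 1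

/-- `Pr_{x ∼ μ}[φ(x) = 1]`. -/
noncomputable def CNF.pr {n : ℕ} (φ : CNF n) (μ : (Fin n → Bool) → ℝ) : ℝ :=
  ∑ x, if φ.sat x then μ x else 0

/-- `D_μ(f)`: the maximum, over CNF formulas `φ` with `φ⁻¹(1) ⊆ f⁻¹(1)` and `|φ| ≥ 1`,
of `Pr_{x∼μ}[φ(x)=1] / |φ|` (0 if there is no such formula). -/
noncomputable def Dmu {n : ℕ} (f : (Fin n → Bool) → Bool) (μ : (Fin n → Bool) → ℝ) : ℝ :=
  sSup {r : ℝ | ∃ φ : CNF n, φ.onesided f ∧ 1 ≤ φ.card ∧ r = φ.pr μ / φ.card}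

/-- `D(f)`: the minimum of `D_μ(f)` over distributions `μ` on `f⁻¹(1)`. -/
noncomputable def Dof {n : ℕ} (f : (Fin n → Bool) → Bool) : ℝ :=
  sInf {r : ℝ | ∃ μ, IsDistOn μ f ∧ r = Dmu f μ}

/-- The monotone variant `D⁺_μ(f)`, restricted to monotone CNF formulas. -/
noncomputable def DmuPlus {n : ℕ} (f : (Fin n → Bool) → Bool) (μ : (Fin n → Bool) → ℝ) : ℝ :=
  sSup {r : ℝ | ∃ φ : CNF n, φ.mono ∧ φ.onesided f ∧ 1 ≤ φ.card ∧ r = φ.pr μ / φ.card}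

/-- `D⁺(f)`: the minimum of `D⁺_μ(f)` over distributions `μ` on `f⁻¹(1)`. -/
noncomputable def DPlus {n : ℕ} (f : (Fin n → Bool) → Bool) : ℝ :=
  sInf {r : ℝ | ∃ μ, IsDistOn μ f ∧ r = DmuPlus f μ}

/-- A list of CNF formulas computes `f` as their pointwise disjunction. -/
def ComputedByOr {n : ℕ} (L : List (CNF n)) (f : (Fin n → Bool) → Bool) : Prop :=
  ∀ x, f x = true ↔ ∃ φ ∈ L, φ.sat x

/-- `L₃(f)`: the minimum size (total number of clauses) of a depth-3 formula computing `f`. -/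
noncomputable def L3 {n : ℕ} (f : (Fin n → Bool) → Bool) : ℕ :=
  sInf {s : ℕ | ∃ L : List (CNF n), ComputedByOr L f ∧ s = (L.map Finset.card).sum}

/-- `L₃⁺(f)`: the minimum size of a depth-3 monotone formula computing `f`. -/
noncomputable def L3Plus {n : ℕ} (f : (Fin n → Bool) → Bool) : ℕ :=
  sInf {s : ℕ | ∃ L : List (CNF n), (∀ φ ∈ L, φ.mono) ∧ ComputedByOr L f ∧
    s = (L.map Finset.card).sum}

/-- The number of ones in a Boolean input. -/
def ones {n : ℕ} (x : Fin n → Bool) : ℕ := (Finset.univ.filter fun i => x i = true).card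

/-- The parity function: `1` iff the number of ones is odd. -/
def parityF (n : ℕ) : (Fin n → Bool) → Bool := fun x => decide (ones x % 2 = 1)

/-- The majority function: `1` iff the number of ones is at least `n/2`. -/
def majF (n : ℕ) : (Fin n → Bool) → Bool := fun x => decide (n ≤ 2 * ones x)

/-- `Pr_{x uniform in f⁻¹(1)}[φ(x) = 1]`. -/
noncomputable def prUnif {n : ℕ} (f : (Fin n → Bool) → Bool) (φ : CNF n) : ℝ :=
  ((Finset.univ.filter fun x => f x = true ∧ φ.sat x).card : ℝ) /
    ((Finset.univ.filter fun x => f x = true).card : ℝ)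

/-- `x` is an isolated solution of `φ`: `φ(x)=1` and `φ(y)=0` for every `y`
differing from `x` in exactly one coordinate. -/
def IsIsolated {n : ℕ} (φ : CNF n) (x : Fin n → Bool) : Prop :=
  φ.sat x ∧ ∀ y : Fin n → Bool, hammingDist x y = 1 → ¬ φ.sat y

/-- The literal asserting `x_i = b`. -/
def litEq {n : ℕ} (i : Fin n) (b : Bool) : Lit n := ⟨i, !b⟩

theorem litEq_eval {n : ℕ} (i : Fin n) (b : Bool) (x : Fin n → Bool) :
    (litEq i b).eval x = true ↔ x i = b := by
  cases b <;> simp [litEq, Lit.eval]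

/-- The point `c` with its `i`-th coordinate flipped. -/
def flipAt {k : ℕ} (c : Fin k → Bool) (i : Fin k) : Fin k → Bool :=
  Function.update c i (!c i)

theorem flipAt_same {k : ℕ} (c : Fin k → Bool) (i : Fin k) : flipAt c i i = !c i := by
  simp [flipAt]

theorem flipAt_ne {k : ℕ} (c : Fin k → Bool) {i j : Fin k} (h : j ≠ i) :
    flipAt c i j = c j := by
  simp [flipAt, h]

theorem flipAt_flipAt {k : ℕ} (c : Fin k → Bool) (i : Fin k) : flipAt (flipAt c i) i = c := by
  simp [flipAt]

theorem flipAt_injective {k : ℕ} (c : Fin k → Bool) : Function.Injective (flipAt c) := by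
  intro i j h
  by_contra hij
  have h1 := congrFun h i
  rw [flipAt_same, flipAt_ne c hij] at h1
  simp at h1

/-- The clause stating that `z` differs from `c` somewhere. -/
def someClause (m : ℕ) {k : ℕ} (c : Fin k → Bool) : Clause (m + k) :=
  Finset.univ.image fun j => litEq (Fin.natAdd m j) (!c j)

/-- The clause stating that `z` agrees with `c` at one of the two coordinates `p.1`, `p.2`. -/
def pairClause (m : ℕ) {k : ℕ} (c : Fin k → Bool) (p : Fin k × Fin k) : Clause (m + k) :=
  {litEq (Fin.natAdd m p.1) (c p.1), litEq (Fin.natAdd m p.2) (c p.2)}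

/-- The clause stating that `y ≠ a` or `z` differs from `c` in a direction `j` for which
`f` holds at `(a, flipAt c j)`. -/
def valueClause {m k : ℕ} (f : (Fin (m + k) → Bool) → Bool) (c : Fin k → Bool)
    (a : Fin m → Bool) : Clause (m + k) :=
  (Finset.univ.image fun i => litEq (Fin.castAdd k i) (!a i)) ∪
    (Finset.univ.filter fun j => f (Fin.append a (flipAt c j)) = true).image
      fun j => litEq (Fin.natAdd m j) (!c j)

/-- A CNF for `f(y, z) ∧ [z ∈ sphere(c)]`. -/
def sphereCNF {m k : ℕ} (f : (Fin (m + k) → Bool) → Bool) (c : Fin k → Bool) : CNF (m + k) :=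
  insert (someClause m c) (Finset.univ.offDiag.image (pairClause m c) ∪
    Finset.univ.image (valueClause f c))

/-- The part `z` of the input `(y, z)`. -/
def zPart {m k : ℕ} (x : Fin (m + k) → Bool) : Fin k → Bool := fun j => x (Fin.natAdd m j)

theorem someClause_sat {m k : ℕ} (c : Fin k → Bool) (x : Fin (m + k) → Bool) :
    (∃ l ∈ someClause m c, l.eval x = true) ↔ ∃ j, zPart x j = !c j := by
  simp [someClause, litEq_eval, zPart]

theorem pairClause_sat {m k : ℕ} (c : Fin k → Bool) (p : Fin k × Fin k)
    (x : Fin (m + k) → Bool) :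
    (∃ l ∈ pairClause m c p, l.eval x = true) ↔
      zPart x p.1 = c p.1 ∨ zPart x p.2 = c p.2 := by
  simp [pairClause, litEq_eval, zPart]

theorem valueClause_sat {m k : ℕ} (f : (Fin (m + k) → Bool) → Bool) (c : Fin k → Bool)
    (a : Fin m → Bool) (x : Fin (m + k) → Bool) :
    (∃ l ∈ valueClause f c a, l.eval x = true) ↔
      (∃ i, x (Fin.castAdd k i) = !a i) ∨
        ∃ j, f (Fin.append a (flipAt c j)) = true ∧ zPart x j = !c j := by
  simp only [valueClause, Finset.mem_union, Finset.mem_image, Finset.mem_univ, true_and,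
    Finset.mem_filter]
  constructor
  · rintro ⟨l, ⟨i, rfl⟩ | ⟨j, hj, rfl⟩, hl⟩
    · exact Or.inl ⟨i, (litEq_eval _ _ _).1 hl⟩
    · exact Or.inr ⟨j, hj, (litEq_eval _ _ _).1 hl⟩
  · rintro (⟨i, hi⟩ | ⟨j, hj, hl⟩)
    · exact ⟨_, Or.inl ⟨i, rfl⟩, (litEq_eval _ _ _).2 hi⟩
    · exact ⟨_, Or.inr ⟨j, hj, rfl⟩, (litEq_eval _ _ _).2 hl⟩

theorem sphereCNF_sat {m k : ℕ} (f : (Fin (m + k) → Bool) → Bool) (c : Fin k → Bool)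
    (x : Fin (m + k) → Bool) :
    (sphereCNF f c).sat x ↔ f x = true ∧ ∃ i, zPart x = flipAt c i := by
  have hx : ∀ i, zPart x = flipAt c i →
      Fin.append (fun i => x (Fin.castAdd k i)) (flipAt c i) = x := by
    intro i hi
    rw [← hi]
    exact Fin.append_castAdd_natAdd
  have key : (sphereCNF f c).sat x ↔ (∃ j, zPart x j = !c j) ∧
      (∀ i j, i ≠ j → zPart x i = c i ∨ zPart x j = c j) ∧
      ∀ a : Fin m → Bool, (∃ i, x (Fin.castAdd k i) = !a i) ∨
        ∃ j, f (Fin.append a (flipAt c j)) = true ∧ zPart x j = !c j := by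
    simp only [CNF.sat, sphereCNF, Finset.forall_mem_insert, Finset.forall_mem_union,
      Finset.forall_mem_image, someClause_sat, pairClause_sat, valueClause_sat,
      Finset.mem_offDiag, Finset.mem_univ, true_and, forall_const, Prod.forall]
  rw [key]
  constructor
  · rintro ⟨⟨j, hj⟩, hp, hv⟩
    have hz : zPart x = flipAt c j := by
      funext i
      by_cases hij : i = j
      · rw [hij, hj, flipAt_same]
      · rw [flipAt_ne c hij]
        rcases hp i j hij with h | h
        · exact h
        · rw [hj] at h
          simp at h
    refine ⟨?_, j, hz⟩
    -- Only the clause whose `a` is the actual `y` carries information about `x`.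
    rcases hv fun i => x (Fin.castAdd k i) with ⟨i, hi⟩ | ⟨j', hf, hj'⟩
    · simp at hi
    · have : j' = j := by
        by_contra hne
        rw [hz, flipAt_ne c hne] at hj'
        simp at hj'
      rwa [this, hx j hz] at hf
  · rintro ⟨hf, i, hz⟩
    refine ⟨⟨i, by rw [hz, flipAt_same]⟩, ?_, ?_⟩
    · intro a b hab
      by_cases ha : a = i
      · exact Or.inr (by rw [hz, flipAt_ne c (fun h => hab (ha.trans h.symm))])
      · exact Or.inl (by rw [hz, flipAt_ne c ha])
    · intro a
      by_cases ha : a = fun i => x (Fin.castAdd k i)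
      · exact Or.inr ⟨i, by rw [ha, hx i hz]; exact hf, by rw [hz, flipAt_same]⟩
      · left
        by_contra! h
        exact ha (funext fun j => by simpa using (h j).symm)

theorem sphereCNF_card {m k : ℕ} (f : (Fin (m + k) → Bool) → Bool) (c : Fin k → Bool) :
    (sphereCNF f c).card ≤ 2 ^ m + (1 + k ^ 2) := by
  have h1 : (Finset.univ.offDiag.image (pairClause m c)).card ≤ k ^ 2 := by
    refine Finset.card_image_le.trans ?_
    rw [Finset.offDiag_card, Finset.card_univ, Fintype.card_fin, pow_two]
    exact Nat.sub_le _ _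
  have h2 : (Finset.univ.image (valueClause f c)).card ≤ 2 ^ m := by
    refine Finset.card_image_le.trans ?_
    simp
  have h3 := Finset.card_union_le (Finset.univ.image (valueClause f c))
    (Finset.univ.offDiag.image (pairClause m c))
  have h4 := Finset.card_insert_le (someClause m c)
    (Finset.univ.offDiag.image (pairClause m c) ∪ Finset.univ.image (valueClause f c))
  rw [Finset.union_comm] at h3
  unfold sphereCNF
  omega

/-- Double counting: each `x` lies over exactly `k` of the `2^k` spheres, so some sphere
captures at least its average share of `A`. -/
theorem exists_center {m k : ℕ} (A : Finset (Fin (m + k) → Bool)) :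
    ∃ c : Fin k → Bool,
      A.card * k ≤ 2 ^ k * (A.filter fun x => ∃ i, zPart x = flipAt c i).card := by
  classical
  have hcount : ∀ x : Fin (m + k) → Bool,
      (Finset.univ.filter fun c : Fin k → Bool => ∃ i, zPart x = flipAt c i).card = k := by
    intro x
    have : (Finset.univ.filter fun c : Fin k → Bool => ∃ i, zPart x = flipAt c i) =
        Finset.univ.image (flipAt (zPart x)) := by
      ext c
      simp only [Finset.mem_filter, Finset.mem_univ, true_and, Finset.mem_image]
      constructor
      · rintro ⟨i, hi⟩
        exact ⟨i, by rw [hi, flipAt_flipAt]⟩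
      · rintro ⟨i, rfl⟩
        exact ⟨i, by rw [flipAt_flipAt]⟩
    rw [this, Finset.card_image_of_injective _ (flipAt_injective _)]
    simp
  have hsum := Finset.sum_card_bipartiteAbove_eq_sum_card_bipartiteBelow
    (s := A) (t := (Finset.univ : Finset (Fin k → Bool)))
    (fun x c => ∃ i, zPart x = flipAt c i)
  simp only [Finset.bipartiteAbove, Finset.bipartiteBelow, hcount, Finset.sum_const,
    smul_eq_mul] at hsum
  by_contra! h
  have hlt := Finset.sum_lt_sum_of_nonempty (s := (Finset.univ : Finset (Fin k → Bool)))
    Finset.univ_nonempty fun c _ => h c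
  rw [← Finset.mul_sum, Finset.sum_const, smul_eq_mul, Finset.card_univ] at hlt
  simp only [Fintype.card_fun, Fintype.card_bool, Fintype.card_fin] at hlt
  rw [hsum] at hlt
  exact lt_irrefl _ hlt

theorem one_add_sq_le (m : ℕ) : 1 + (m + 1) ^ 2 ≤ 3 * 2 ^ m := by
  induction m with
  | zero => norm_num
  | succ m ih =>
    rw [pow_succ 2 m]
    rcases m with _ | m
    · norm_num
    · generalize 2 ^ (m + 1) = t at ih ⊢
      nlinarith [Nat.zero_le (m ^ 2), Nat.zero_le m]

/-- universal upper bound: every `f` has a one-sided CNF approximator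
of size `ε·2^{n+3}/n` with advantage `ε`, for some `ε`. -/
theorem stmt9 : ∃ N : ℕ, ∀ n : ℕ, N ≤ n → ∀ f : (Fin n → Bool) → Bool,
    (∃ x, f x = true) →
    ∃ (ε : ℝ) (φ : CNF n), 0 < ε ∧ ε ≤ 1 ∧ φ.onesided f ∧ ε ≤ prUnif f φ ∧
      (φ.card : ℝ) ≤ ε * 2 ^ (n + 3) / n := by
  refine ⟨1, fun n hn f hf => ?_⟩
  obtain ⟨m, k, rfl, hmk, hkm, hk⟩ : ∃ m k, n = m + k ∧ m ≤ k ∧ k ≤ m + 1 ∧ 1 ≤ k :=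
    ⟨n / 2, n - n / 2, by omega, by omega, by omega, by omega⟩
  obtain ⟨x₀, hx₀⟩ := hf
  set A := Finset.univ.filter fun x => f x = true with hA
  obtain ⟨c, hc⟩ := exists_center A
  set S := A.filter fun x => ∃ i, zPart x = flipAt c i with hS
  have hApos : 0 < A.card := Finset.card_pos.2 ⟨x₀, by simp [hA, hx₀]⟩
  have hSpos : 0 < S.card := by
    have : 0 < A.card * k := Nat.mul_pos hApos hk
    exact Nat.pos_of_mul_pos_left (this.trans_le hc)
  have hSA : S.card ≤ A.card := Finset.card_filter_le _ _
  have hpr : prUnif f (sphereCNF f c) = (S.card : ℝ) / A.card := by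
    have : (Finset.univ.filter fun x => f x = true ∧ (sphereCNF f c).sat x) = S := by
      ext x
      simp [hS, hA, sphereCNF_sat]
    rw [prUnif, this]
  have hA' : (0 : ℝ) < A.card := by exact_mod_cast hApos
  have hS' : (0 : ℝ) < S.card := by exact_mod_cast hSpos
  refine ⟨(S.card : ℝ) / A.card, sphereCNF f c, div_pos hS' hA', ?_, ?_, hpr.ge, ?_⟩
  · rw [div_le_one hA']
    exact_mod_cast hSA
  · exact fun x hx => ((sphereCNF_sat f c x).1 hx).1
  · have hcard : (sphereCNF f c).card ≤ 4 * 2 ^ m := by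
      have h1 := sphereCNF_card f c
      have h2 := one_add_sq_le m
      have h3 : k ^ 2 ≤ (m + 1) ^ 2 := Nat.pow_le_pow_left hkm 2
      omega
    have hcard' : ((sphereCNF f c).card : ℝ) ≤ 4 * 2 ^ m := by exact_mod_cast hcard
    have hn' : (0 : ℝ) < ((m + k : ℕ) : ℝ) := by exact_mod_cast hn
    have hc' : (A.card : ℝ) * k ≤ 2 ^ k * S.card := by exact_mod_cast hc
    have hmk' : ((m + k : ℕ) : ℝ) ≤ 2 * k := by exact_mod_cast (by omega : m + k ≤ 2 * k)
    refine hcard'.trans ?_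
    rw [le_div_iff₀ hn', div_mul_eq_mul_div, le_div_iff₀ hA']
    calc (4 : ℝ) * 2 ^ m * ((m + k : ℕ) : ℝ) * A.card
        ≤ 4 * 2 ^ m * (2 * k) * A.card := by gcongr
      _ = 8 * 2 ^ m * (A.card * k) := by ring
      _ ≤ 8 * 2 ^ m * (2 ^ k * S.card) := by gcongr
      _ = S.card * 2 ^ (m + k + 3) := by ring
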